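/- Let d ≥ 3 and let G be a d-regular graph on n vertices that is bicycle-free at radius r. Then the total number of singleton-free (k−1)-hikes in G is at most (2^{γ₁}·√(d−1))^{2k}, where γ₁ = 1 + log₂(nrk)/(2k) + log₂(rk)/r. -/

import Mathlib

open scoped Classical

noncomputable section

/-- The ball of radius `r` about `v` in `G` (within the connected component of `v`). -/
def gBall {V : Type*} (G : SimpleGraph V) (v : V) (r : ℕ) : Set V :=
  {u | G.Reachable v u ∧ G.dist v u ≤ r}

/-- `G` is bicycle-free at radius `r`: the subgraph induced on every ball of radius `r`
has at most as many edges as vertices. -/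
def BicycleFree {V : Type*} (G : SimpleGraph V) (r : ℕ) : Prop :=
  ∀ v : V,
    (G.edgeSet ∩ {e : Sym2 V | ∀ x ∈ e, x ∈ gBall G v r}).ncard ≤ (gBall G v r).ncard

/-- A `k`-hike in `G`: a closed walk `v₀, …, v_{2k}` with `v₀ = v_{2k}` in which every
step except possibly the `(k+1)`-st is non-backtracking. -/
def IsHike {V : Type*} (G : SimpleGraph V) (k : ℕ) (f : Fin (2 * k + 1) → V) : Prop :=
  (∀ (i : ℕ) (h : i < 2 * k), G.Adj (f ⟨i, by omega⟩) (f ⟨i + 1, by omega⟩)) ∧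
  f ⟨2 * k, by omega⟩ = f ⟨0, by omega⟩ ∧
  ∀ (i : ℕ) (h1 : 1 ≤ i) (h2 : i < 2 * k), i ≠ k → f ⟨i + 1, by omega⟩ ≠ f ⟨i - 1, by omega⟩

/-- The number of steps of the closed walk `f` traversing the undirected edge `e`. -/
def edgeCount {V : Type*} [DecidableEq V] (k : ℕ) (f : Fin (2 * k + 1) → V)
    (e : Sym2 V) : ℕ :=
  (Finset.univ.filter fun i : Fin (2 * k) =>
    s(f ⟨i.1, Nat.lt_succ_of_lt i.2⟩, f ⟨i.1 + 1, Nat.succ_lt_succ i.2⟩) = e).card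

/-- A hike is singleton-free if no edge is traversed exactly once. -/
def IsSingletonFree {V : Type*} [DecidableEq V] (k : ℕ) (f : Fin (2 * k + 1) → V) : Prop :=
  ∀ e : Sym2 V, edgeCount k f e ≠ 1


/-- Non-backtracking walk on the index interval `[a,b]`. -/
def NBW {W : Type*} (H : SimpleGraph W) (a b : ℕ) (f : ℕ → W) : Prop :=
  (∀ i, a ≤ i → i < b → H.Adj (f i) (f (i + 1))) ∧
  (∀ i, a ≤ i → i + 2 ≤ b → f (i + 2) ≠ f i)

lemma nbw_walk {W : Type*} (T : SimpleGraph W) (f : ℕ → W) (m : ℕ) :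
    ∀ a, NBW T a (a + m) f → ∃ p : T.Walk (f a) (f (a + m)), p.length = m ∧
      (∀ i ≤ m, p.getVert i = f (a + i)) ∧ List.IsChain (· ≠ ·) p.edges ∧
      (∀ e, p.edges.head? = some e → e = s(f a, f (a + 1))) := by
  induction m with
  | zero =>
    intro a _
    exact ⟨SimpleGraph.Walk.nil, rfl, by simp, by simp, by simp⟩
  | succ m ih =>
    intro a h
    have h1 : T.Adj (f a) (f (a + 1)) := h.1 a le_rfl (by omega)
    obtain ⟨p, hp1, hp2, hp3, hp4⟩ := ih (a + 1)
      ⟨fun i hi hi2 => h.1 i (by omega) (by omega), fun i hi hi2 => h.2 i (by omega) (by omega)⟩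
    have e : a + 1 + m = a + (m + 1) := by omega
    refine ⟨(SimpleGraph.Walk.cons h1 p).copy rfl (by rw [e]), by simp [hp1], ?_, ?_, ?_⟩
    · intro i hi
      rw [SimpleGraph.Walk.getVert_copy]
      cases i with
      | zero => simp
      | succ i =>
        rw [SimpleGraph.Walk.getVert_cons_succ, hp2 i (by omega)]
        congr 1; omega
    · rw [SimpleGraph.Walk.edges_copy, SimpleGraph.Walk.edges_cons, List.isChain_cons]
      refine ⟨?_, hp3⟩
      intro y hy
      have hm : m ≠ 0 := by
        rintro rfl
        have hl := p.length_edges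
        rw [hp1, List.length_eq_zero_iff] at hl
        rw [hl] at hy
        simp at hy
      rw [hp4 y hy]
      have := h.2 a le_rfl (by omega)
      intro hh
      rw [Sym2.eq_iff] at hh
      rcases hh with ⟨h3, h4⟩ | ⟨h3, h4⟩
      · exact h1.ne h3
      · exact this h3.symm
    · simp

lemma nbw_dist {W : Type*} {T : SimpleGraph W} (hT : T.IsTree) {f : ℕ → W} {a b : ℕ}
    (hab : a ≤ b) (h : NBW T a b f) : T.dist (f a) (f b) = b - a := by
  obtain ⟨m, rfl⟩ := Nat.exists_eq_add_of_le hab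
  obtain ⟨p, hp1, hp2, hp3, hp4⟩ := nbw_walk T f m a h
  have hp := (hT.isAcyclic.isPath_iff_isChain p).2 hp3
  obtain ⟨q, hq, hq2⟩ := hT.connected.exists_path_of_dist (f a) (f (a + m))
  have := @Subsingleton.elim _ (hT.isAcyclic.subsingleton_path _ _) ⟨p, hp⟩ ⟨q, hq⟩
  have h5 : p = q := congrArg Subtype.val this
  rw [← hq2, ← h5, hp1]; omega

lemma nbw_unique {W : Type*} {T : SimpleGraph W} (hT : T.IsTree) {f g : ℕ → W} {a b : ℕ}
    (hab : a ≤ b) (hf : NBW T a b f) (hg : NBW T a b g) (h1 : f a = g a) (h2 : f b = g b) :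
    ∀ i, a ≤ i → i ≤ b → f i = g i := by
  obtain ⟨m, rfl⟩ := Nat.exists_eq_add_of_le hab
  obtain ⟨p, hp1, hp2, hp3, hp4⟩ := nbw_walk T f m a hf
  obtain ⟨q, hq1, hq2, hq3, hq4⟩ := nbw_walk T g m a hg
  have hp := (hT.isAcyclic.isPath_iff_isChain p).2 hp3
  have hq := (hT.isAcyclic.isPath_iff_isChain q).2 hq3
  have hq' : (q.copy h1.symm h2.symm).IsPath := by simpa using hq
  have := @Subsingleton.elim _ (hT.isAcyclic.subsingleton_path _ _) ⟨p, hp⟩ ⟨_, hq'⟩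
  have h5 : p = q.copy h1.symm h2.symm := congrArg Subtype.val this
  intro i hi hi2
  obtain ⟨j, rfl⟩ := Nat.exists_eq_add_of_le hi
  rw [← hp2 j (by omega), ← hq2 j (by omega), h5, SimpleGraph.Walk.getVert_copy]

/-- `f` is a walk on `[a,b]` all of whose non-`T`-steps are `x → y`. -/
def DirW {W : Type*} (T : SimpleGraph W) (x y : W) (a b : ℕ) (f : ℕ → W) : Prop :=
  (∀ i, a ≤ i → i < b → ¬ T.Adj (f i) (f (i + 1)) → f i = x ∧ f (i + 1) = y) ∧
  (∀ i, a ≤ i → i + 2 ≤ b → f (i + 2) ≠ f i)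

lemma DirW.mono {W : Type*} {T : SimpleGraph W} {x y : W} {a b a' b' : ℕ} {f : ℕ → W}
    (h : DirW T x y a b f) (ha : a ≤ a') (hb : b' ≤ b) : DirW T x y a' b' f :=
  ⟨fun i h1 h2 => h.1 i (by omega) (by omega), fun i h1 h2 => h.2 i (by omega) (by omega)⟩

lemma DirW.nbw {W : Type*} {T : SimpleGraph W} {x y : W} {a b : ℕ} {f : ℕ → W}
    (h : DirW T x y a b f) (hc : ∀ i, a ≤ i → i < b → T.Adj (f i) (f (i + 1))) : NBW T a b f :=
  ⟨hc, h.2⟩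

/-- first crossing -/
lemma dirw_first {W : Type*} {T : SimpleGraph W} (hT : T.IsTree) {x y : W} {a b : ℕ} {f : ℕ → W}
    (h : DirW T x y a b f) {j : ℕ} (hj : a ≤ j) (hjb : j < b) (hc : ¬ T.Adj (f j) (f (j + 1))) :
    ∃ i, i = a + T.dist (f a) x ∧ i ≤ j ∧ f i = x ∧ f (i + 1) = y ∧ NBW T a i f := by
  have hex : ∃ i, a ≤ i ∧ ¬ T.Adj (f i) (f (i + 1)) := ⟨j, hj, hc⟩
  let i := Nat.find hex
  have hi := Nat.find_spec hex
  have hij : i ≤ j := Nat.find_min' hex ⟨hj, hc⟩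
  have hxy := h.1 i hi.1 (by omega) hi.2
  have hn : NBW T a i f := by
    refine ⟨fun l hl hl2 => ?_, fun l hl hl2 => h.2 l hl (by omega)⟩
    have := Nat.find_min hex hl2
    by_contra hh
    exact this ⟨hl, hh⟩
  have hd := nbw_dist hT hi.1 hn
  refine ⟨i, ?_, hij, hxy.1, hxy.2, hn⟩
  have h3 : f i = x := hxy.1
  change T.dist (f a) (f i) = i - a at hd
  rw [h3] at hd
  have : a ≤ i := hi.1
  omega

/-- last crossing -/
lemma dirw_last {W : Type*} {T : SimpleGraph W} (hT : T.IsTree) {x y : W} {a b : ℕ} {f : ℕ → W}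
    (h : DirW T x y a b f) {j : ℕ} (hj : a ≤ j) (hjb : j < b) (hc : ¬ T.Adj (f j) (f (j + 1))) :
    ∃ i, i + 1 + T.dist y (f b) = b ∧ j ≤ i ∧ ¬ T.Adj (f i) (f (i + 1)) ∧ f i = x ∧ f (i + 1) = y
      ∧ NBW T (i + 1) b f := by
  have hex : ∃ i, a ≤ i ∧ i < b ∧ ¬ T.Adj (f i) (f (i + 1)) ∧
      ∀ l, i < l → l < b → T.Adj (f l) (f (l + 1)) := by
    let P := fun i => a ≤ i ∧ i < b ∧ ¬ T.Adj (f i) (f (i + 1))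
    have hP : P (Nat.findGreatest P b) := Nat.findGreatest_spec (P := P) hjb.le ⟨hj, hjb, hc⟩
    refine ⟨Nat.findGreatest P b, hP.1, hP.2.1, hP.2.2, fun l hl hl2 => ?_⟩
    by_contra hh
    exact Nat.findGreatest_is_greatest (P := P) hl hl2.le ⟨by have := hP.1; omega, hl2, hh⟩
  obtain ⟨i, h1, h2, h3, h4⟩ := hex
  have hxy := h.1 i h1 h2 h3
  have hn : NBW T (i + 1) b f :=
    ⟨fun l hl hl2 => h4 l (by omega) hl2, fun l hl hl2 => h.2 l (by omega) hl2⟩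
  have hd := nbw_dist hT h2 hn
  refine ⟨i, ?_, ?_, h3, hxy.1, hxy.2, hn⟩
  · rw [Nat.succ_eq_add_one, hxy.2] at hd; omega
  · by_contra hh
    exact hc (h4 j (by omega) hjb)

lemma dirw_ray {W : Type*} {T : SimpleGraph W} (hT : T.IsTree) {x y : W} {b c : ℕ} {f g : ℕ → W}
    {j j' s : ℕ} (hjb : j < b) (hsj : s ≤ j) (hc : ¬ T.Adj (f j) (f (j + 1)))
    (hjb' : j' < c) (hsj' : s ≤ j') (hc' : ¬ T.Adj (g j') (g (j' + 1))) (m : ℕ) :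
    ∀ a, s = a + m → DirW T x y a b f → DirW T x y a c g → f a = g a → f s = g s := by
  induction m using Nat.strong_induction_on with
  | _ m ih =>
    intro a hs hf hg hfg
    obtain ⟨i, hi, hij, hix, hiy, hin⟩ := dirw_first hT hf (by omega) hjb hc
    obtain ⟨i', hi', hij', hix', hiy', hin'⟩ := dirw_first hT hg (by omega) hjb' hc'
    rw [← hfg, ← hi] at hi'
    subst hi'
    by_cases hsi : s ≤ i'
    · exact nbw_unique hT (by omega) hin hin' hfg (by rw [hix, hix']) s (by omega) hsi
    · exact ih (s - (i' + 1)) (by omega) (i' + 1) (by omega) (hf.mono (by omega) le_rfl)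
        (hg.mono (by omega) le_rfl) (by rw [hiy, hiy'])

lemma dirw_unique {W : Type*} {T : SimpleGraph W} (hT : T.IsTree) {x y : W} {b : ℕ} {f g : ℕ → W}
    {j j' : ℕ} (hjb : j < b) (hc : ¬ T.Adj (f j) (f (j + 1)))
    (hjb' : j' < b) (hc' : ¬ T.Adj (g j') (g (j' + 1)))
    (hf : DirW T x y 0 b f) (hg : DirW T x y 0 b g) (h0 : f 0 = g 0) (hb : f b = g b) :
    ∀ i ≤ b, f i = g i := by
  obtain ⟨i, hi, hij, hic, hix, hiy, hin⟩ := dirw_last hT hf (Nat.zero_le _) hjb hc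
  obtain ⟨i', hi', hij', hic', hix', hiy', hin'⟩ := dirw_last hT hg (Nat.zero_le _) hjb' hc'
  have : i = i' := by rw [← hb] at hi'; omega
  subst this
  intro s hs
  by_cases hsi : s ≤ i
  · exact dirw_ray hT (by omega) hsi hic (by omega : i < b) hsi hic' s 0 (by omega) hf hg h0
  · exact nbw_unique hT (by omega) hin hin' (by rw [hiy, hiy']) hb s (by omega) hs

lemma nbw_dir {W : Type*} {T H : SimpleGraph W} (hT : T.IsTree) {x y : W}
    (hH : ∀ a b, H.Adj a b → T.Adj a b ∨ (a = x ∧ b = y) ∨ (a = y ∧ b = x))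
    {b : ℕ} {f : ℕ → W} (hf : NBW H 0 b f) :
    NBW T 0 b f ∨ (∃ j < b, ¬ T.Adj (f j) (f (j + 1))) ∧ DirW T x y 0 b f ∨
      (∃ j < b, ¬ T.Adj (f j) (f (j + 1))) ∧ DirW T y x 0 b f := by
  have key : ∀ x y : W, (∀ a b, H.Adj a b → T.Adj a b ∨ (a = x ∧ b = y) ∨ (a = y ∧ b = x)) →
    ∀ m i j, j = i + m → j < b → ¬ T.Adj (f i) (f (i + 1)) → f i = x → f (i + 1) = y →
     ¬ T.Adj (f j) (f (j + 1)) → f j = x ∧ f (j + 1) = y := by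
    intro x y hH m
    induction m using Nat.strong_induction_on with
    | _ m ih =>
      intro i j hj hjb hi hix hiy hjc
      rcases Nat.eq_zero_or_pos m with rfl | hm
      · simp at hj; subst hj; exact ⟨hix, hiy⟩
      by_cases hl : ∃ l, i < l ∧ l < j ∧ ¬ T.Adj (f l) (f (l + 1))
      · obtain ⟨l, h1, h2, h3⟩ := hl
        have h4 := ih (l - i) (by omega) i l (by omega) (by omega) hi hix hiy h3
        exact ih (j - l) (by omega) l j (by omega) (by omega) h3 h4.1 h4.2 hjc
      push Not at hl
      rcases hH _ _ (hf.1 j (by omega) hjb) with h1 | h1 | h1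
      · exact absurd h1 hjc
      · exact h1
      · exfalso
        have hn : NBW T (i + 1) j f :=
          ⟨fun l h2 h3 => hl l (by omega) h3, fun l h2 h3 => hf.2 l (by omega) (by omega)⟩
        have hd := nbw_dist hT (by omega) hn
        rw [hiy, h1.1, SimpleGraph.dist_self] at hd
        have : j = i + 1 := by omega
        subst this
        exact hf.2 i (by omega) (by omega) (by rw [hix]; exact h1.2)
  by_cases hc : ∃ j < b, ¬ T.Adj (f j) (f (j + 1))
  · right
    have hc0 := hc
    let j := Nat.find hc
    have hj : j < b ∧ ¬ T.Adj (f j) (f (j + 1)) := Nat.find_spec hc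
    have hmin : ∀ i, i < b → ¬ T.Adj (f i) (f (i + 1)) → j ≤ i :=
      fun i h1 h2 => Nat.find_min' hc ⟨h1, h2⟩
    rcases hH _ _ (hf.1 j (by omega) hj.1) with h1 | h1 | h1
    · exact absurd h1 hj.2
    · left
      refine ⟨hc0, fun i _ h2 h3 => ?_, hf.2⟩
      have := hmin i h2 h3
      exact key x y hH (i - j) j i (by omega) h2 hj.2 h1.1 h1.2 h3
    · right
      refine ⟨hc0, fun i _ h2 h3 => ?_, hf.2⟩
      have := hmin i h2 h3
      exact key y x (fun a b hab => by have := hH a b hab; tauto)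
        (i - j) j i (by omega) h2 hj.2 h1.1 h1.2 h3
  · left
    push Not at hc
    exact ⟨fun i _ h => hc i h, hf.2⟩

/-- Fixed endpoint: not all three types. -/
lemma three_endpoint {W : Type*} {T H : SimpleGraph W} (hT : T.IsTree) {x y : W}
    (hH : ∀ a b, H.Adj a b → T.Adj a b ∨ (a = x ∧ b = y) ∨ (a = y ∧ b = x))
    {b : ℕ} {f g h : ℕ → W} (hf : NBW H 0 b f) (hg : NBW H 0 b g) (hh : NBW H 0 b h)
    (h1 : f 0 = g 0) (h2 : f 0 = h 0) (h3 : f b = g b) (h4 : f b = h b) :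
    (∀ i ≤ b, f i = g i) ∨ (∀ i ≤ b, f i = h i) ∨ (∀ i ≤ b, g i = h i) := by
  have TT : ∀ f g : ℕ → W, f 0 = g 0 → f b = g b → NBW T 0 b f → NBW T 0 b g →
      ∀ i ≤ b, f i = g i := fun f g h0 hb hf hg i hi =>
    nbw_unique hT (Nat.zero_le _) hf hg h0 hb i (Nat.zero_le _) hi
  have DD : ∀ (x y : W) (f g : ℕ → W), f 0 = g 0 → f b = g b →
      ((∃ j < b, ¬ T.Adj (f j) (f (j + 1))) ∧ DirW T x y 0 b f) →
      ((∃ j < b, ¬ T.Adj (g j) (g (j + 1))) ∧ DirW T x y 0 b g) →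
      ∀ i ≤ b, f i = g i := by
    rintro x y f g h0 hb ⟨⟨j, hj, hjc⟩, hf⟩ ⟨⟨j', hj', hjc'⟩, hg⟩
    exact dirw_unique hT hj hjc hj' hjc' hf hg h0 hb
  have DL : ∀ (x y : W) (f : ℕ → W),
      ((∃ j < b, ¬ T.Adj (f j) (f (j + 1))) ∧ DirW T x y 0 b f) →
      T.dist (f 0) x + 1 + T.dist y (f b) ≤ b := by
    rintro x y f ⟨⟨j, hj, hjc⟩, hf⟩
    obtain ⟨i, hi, hij, -⟩ := dirw_first hT hf (Nat.zero_le _) hj hjc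
    obtain ⟨i', hi', hij', -⟩ := dirw_last hT hf (Nat.zero_le _) hj hjc
    omega
  have EX : ∀ f g h : ℕ → W, f 0 = g 0 → f 0 = h 0 → f b = g b → f b = h b →
      NBW T 0 b f → ((∃ j < b, ¬ T.Adj (g j) (g (j + 1))) ∧ DirW T x y 0 b g) →
      ((∃ j < b, ¬ T.Adj (h j) (h (j + 1))) ∧ DirW T y x 0 b h) → False := by
    intro f g h h1 h2 h3 h4 hf hg hh
    have a1 := nbw_dist hT (Nat.zero_le _) hf
    have a2 := DL x y g hg
    have a3 := DL y x h hh
    rw [← h1, ← h3] at a2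
    rw [← h2, ← h4] at a3
    have t1 := hT.connected.dist_triangle (u := f 0) (v := x) (w := f b)
    have t2 := hT.connected.dist_triangle (u := f 0) (v := y) (w := f b)
    omega
  have h5 : g 0 = h 0 := h1.symm.trans h2
  have h6 : g b = h b := h3.symm.trans h4
  rcases nbw_dir hT hH hf with cf | cf | cf <;> rcases nbw_dir hT hH hg with cg | cg | cg
  · exact Or.inl (TT f g h1 h3 cf cg)
  · rcases nbw_dir hT hH hh with ch | ch | ch
    · exact Or.inr (Or.inl (TT f h h2 h4 cf ch))
    · exact Or.inr (Or.inr (DD _ _ g h h5 h6 cg ch))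
    · exact (EX f g h h1 h2 h3 h4 cf cg ch).elim
  · rcases nbw_dir hT hH hh with ch | ch | ch
    · exact Or.inr (Or.inl (TT f h h2 h4 cf ch))
    · exact (EX f h g h2 h1 h4 h3 cf ch cg).elim
    · exact Or.inr (Or.inr (DD _ _ g h h5 h6 cg ch))
  · rcases nbw_dir hT hH hh with ch | ch | ch
    · exact Or.inr (Or.inr (TT g h h5 h6 cg ch))
    · exact Or.inr (Or.inl (DD _ _ f h h2 h4 cf ch))
    · exact (EX g f h h1.symm h5 h3.symm h6 cg cf ch).elim
  · exact Or.inl (DD _ _ f g h1 h3 cf cg)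
  · rcases nbw_dir hT hH hh with ch | ch | ch
    · exact (EX h f g h2.symm h5.symm h4.symm h6.symm ch cf cg).elim
    · exact Or.inr (Or.inl (DD _ _ f h h2 h4 cf ch))
    · exact Or.inr (Or.inr (DD _ _ g h h5 h6 cg ch))
  · rcases nbw_dir hT hH hh with ch | ch | ch
    · exact Or.inr (Or.inr (TT g h h5 h6 cg ch))
    · exact (EX g h f h5 h1.symm h6 h3.symm cg ch cf).elim
    · exact Or.inr (Or.inl (DD _ _ f h h2 h4 cf ch))
  · rcases nbw_dir hT hH hh with ch | ch | ch
    · exact (EX h g f h5.symm h2.symm h6.symm h4.symm ch cg cf).elim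
    · exact Or.inr (Or.inr (DD _ _ g h h5 h6 cg ch))
    · exact Or.inr (Or.inl (DD _ _ f h h2 h4 cf ch))
  · exact Or.inl (DD _ _ f g h1 h3 cf cg)

/-- Fixed return time. -/
lemma three_return {W : Type*} {T H : SimpleGraph W} (hT : T.IsTree) {x y : W}
    (hH : ∀ a b, H.Adj a b → T.Adj a b ∨ (a = x ∧ b = y) ∨ (a = y ∧ b = x))
    {b s : ℕ} (hs : s < b) {f g h : ℕ → W} (hf : NBW H 0 b f) (hg : NBW H 0 b g)
    (hh : NBW H 0 b h)
    (h1 : f 0 = g 0) (h2 : f 0 = h 0) (h3 : f s = f b) (h4 : g s = g b) (h5 : h s = h b) :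
    (∀ i ≤ b, f i = g i) ∨ (∀ i ≤ b, f i = h i) ∨ (∀ i ≤ b, g i = h i) := by
  have CR : ∀ f : ℕ → W, NBW H 0 b f → f s = f b →
      ∃ j, s ≤ j ∧ j < b ∧ ¬ T.Adj (f j) (f (j + 1)) := by
    intro f hf h3
    by_contra hcon
    push Not at hcon
    have hn : NBW T s b f := ⟨hcon, fun i _ hi => hf.2 i (by omega) hi⟩
    have := nbw_dist hT hs.le hn
    rw [h3, SimpleGraph.dist_self] at this
    omega
  have CL : ∀ f : ℕ → W, NBW H 0 b f → f s = f b → DirW T x y 0 b f ∨ DirW T y x 0 b f := by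
    intro f hf h3
    obtain ⟨j, hj1, hj2, hj3⟩ := CR f hf h3
    rcases nbw_dir hT hH hf with c | c | c
    · exact absurd (c.1 j (by omega) hj2) hj3
    · exact Or.inl c.2
    · exact Or.inr c.2
  have DD : ∀ (x y : W) (f g : ℕ → W), NBW H 0 b f → NBW H 0 b g → f 0 = g 0 → f s = f b →
      g s = g b → DirW T x y 0 b f → DirW T x y 0 b g → ∀ i ≤ b, f i = g i := by
    intro x y f g hf hg h0 h3 h4 df dg
    obtain ⟨j, hj1, hj2, hj3⟩ := CR f hf h3
    obtain ⟨j', hj1', hj2', hj3'⟩ := CR g hg h4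
    have : f s = g s := dirw_ray hT hj2 hj1 hj3 hj2' hj1' hj3' s 0 (by omega) df dg h0
    exact dirw_unique hT hj2 hj3 hj2' hj3' df dg h0 (by rw [← h3, ← h4, this])
  have h6 : g 0 = h 0 := h1.symm.trans h2
  rcases CL f hf h3 with cf | cf <;> rcases CL g hg h4 with cg | cg <;>
    rcases CL h hh h5 with ch | ch
  · exact Or.inl (DD _ _ f g hf hg h1 h3 h4 cf cg)
  · exact Or.inl (DD _ _ f g hf hg h1 h3 h4 cf cg)
  · exact Or.inr (Or.inl (DD _ _ f h hf hh h2 h3 h5 cf ch))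
  · exact Or.inr (Or.inr (DD _ _ g h hg hh h6 h4 h5 cg ch))
  · exact Or.inr (Or.inr (DD _ _ g h hg hh h6 h4 h5 cg ch))
  · exact Or.inr (Or.inl (DD _ _ f h hf hh h2 h3 h5 cf ch))
  · exact Or.inl (DD _ _ f g hf hg h1 h3 h4 cf cg)
  · exact Or.inl (DD _ _ f g hf hg h1 h3 h4 cf cg)

lemma ball_tree {V : Type*} [Finite V] (G : SimpleGraph V) {r : ℕ} (hbf : BicycleFree G r)
    (u : V) : ∃ T : SimpleGraph (gBall G u r), T.IsTree ∧ ∃ x y, ∀ a b,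
      (G.induce (gBall G u r)).Adj a b → T.Adj a b ∨ (a = x ∧ b = y) ∨ (a = y ∧ b = x) := by
  have hu : u ∈ gBall G u r := ⟨SimpleGraph.Reachable.refl u, by simp⟩
  have hconn : (G.induce (gBall G u r)).Connected := by
    have hreach : ∀ w : gBall G u r, (G.induce (gBall G u r)).Reachable ⟨u, hu⟩ w := by
      rintro ⟨w, hw⟩
      obtain ⟨p, hp⟩ := hw.1.exists_walk_length_eq_dist
      have hs : ∀ z ∈ p.support, z ∈ gBall G u r := by
        intro z hz
        refine ⟨⟨p.takeUntil z hz⟩, ?_⟩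
        have h1 := SimpleGraph.dist_le (p.takeUntil z hz)
        have h2 := p.length_takeUntil_le_length hz
        have h3 := hw.2
        omega
      exact ⟨p.induce _ hs⟩
    have : Nonempty (gBall G u r) := ⟨⟨u, hu⟩⟩
    exact SimpleGraph.Connected.mk fun a b => (hreach a).symm.trans (hreach b)
  obtain ⟨T, hTle, hT⟩ := hconn.exists_isTree_le
  refine ⟨T, hT, ?_⟩
  have c1 : T.edgeSet.ncard + 1 = (gBall G u r).ncard :=
    (SimpleGraph.isTree_iff_connected_and_card.1 hT).2
  have c2 : (G.induce (gBall G u r)).edgeSet.ncard ≤ (gBall G u r).ncard := by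
    refine le_trans (Set.ncard_le_ncard_of_injOn (Sym2.map Subtype.val) ?_ ?_
      (Set.toFinite _)) (hbf u)
    · intro e he
      induction e with
      | _ a b =>
        refine ⟨by simpa using he, ?_⟩
        intro x hx
        simp only [Sym2.map_mk, Sym2.mem_iff] at hx
        rcases hx with rfl | rfl
        · exact a.2
        · exact b.2
    · exact (Sym2.map.injective Subtype.val_injective).injOn
  have c3 : ((G.induce (gBall G u r)).edgeSet \ T.edgeSet).ncard ≤ 1 := by
    rw [Set.ncard_sdiff (SimpleGraph.edgeSet_mono hTle) (Set.toFinite _)]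
    omega
  rw [Set.ncard_le_one (Set.toFinite _)] at c3
  by_cases he : ∃ x y, (G.induce (gBall G u r)).Adj x y ∧ ¬ T.Adj x y
  · obtain ⟨x, y, hxy, hxy2⟩ := he
    refine ⟨x, y, fun a b hab => ?_⟩
    by_cases h : T.Adj a b
    · exact Or.inl h
    · right
      have := c3 s(a, b) ⟨hab, h⟩ s(x, y) ⟨hxy, hxy2⟩
      simpa using this
  · push Not at he
    exact ⟨⟨u, hu⟩, ⟨u, hu⟩, fun a b hab => Or.inl (he a b hab)⟩

lemma three_walks0 {V : Type*} [Finite V] (G : SimpleGraph V) {r : ℕ} (hbf : BicycleFree G r)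
    {b : ℕ} (hb : b ≤ r) {f g h : ℕ → V} (hf : NBW G 0 b f) (hg : NBW G 0 b g)
    (hh : NBW G 0 b h) (h1 : f 0 = g 0) (h2 : f 0 = h 0)
    (hc : (f b = g b ∧ f b = h b) ∨ ∃ s < b, f s = f b ∧ g s = g b ∧ h s = h b) :
    (∀ i ≤ b, f i = g i) ∨ (∀ i ≤ b, f i = h i) ∨ (∀ i ≤ b, g i = h i) := by
  have mem : ∀ f : ℕ → V, NBW G 0 b f → ∀ i, f (min i b) ∈ gBall G (f 0) r := by
    intro f hf i
    have : ∀ i ≤ b, ∃ p : G.Walk (f 0) (f i), p.length = i := by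
      intro i
      induction i with
      | zero => intro _; exact ⟨SimpleGraph.Walk.nil, rfl⟩
      | succ i ih =>
        intro hi
        obtain ⟨p, hp⟩ := ih (by omega)
        exact ⟨p.concat (hf.1 i (by omega) (by omega)), by simp [hp]⟩
    obtain ⟨p, hp⟩ := this (min i b) (by omega)
    refine ⟨⟨p⟩, ?_⟩
    have := SimpleGraph.dist_le p
    omega
  have mf := mem f hf
  have mg := mem g hg
  have mh := mem h hh
  rw [← h1] at mg
  rw [← h2] at mh
  obtain ⟨T, hT, x, y, hxy⟩ := ball_tree G hbf (f 0)
  have lift : ∀ (k : ℕ → V), NBW G 0 b k → ∀ hk : (∀ i, k (min i b) ∈ gBall G (f 0) r),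
      NBW (G.induce (gBall G (f 0) r)) 0 b (fun i => ⟨k (min i b), hk i⟩) := by
    intro k hk hk2
    refine ⟨fun i _ hi => ?_, fun i _ hi => ?_⟩
    · have := hk.1 i (by omega) hi
      simp only [SimpleGraph.comap_adj, Function.Embedding.subtype_apply]
      rwa [min_eq_left hi.le, min_eq_left (by omega : i + 1 ≤ b)]
    · have := hk.2 i (by omega) hi
      simp only [ne_eq, Subtype.mk.injEq]
      rwa [min_eq_left hi, min_eq_left (by omega : i ≤ b)]
  have res : ∀ k l : ℕ → V, ∀ hk : (∀ i, k (min i b) ∈ gBall G (f 0) r),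
      ∀ hl : (∀ i, l (min i b) ∈ gBall G (f 0) r),
      (∀ i ≤ b, (⟨k (min i b), hk i⟩ : gBall G (f 0) r) = ⟨l (min i b), hl i⟩) →
      ∀ i ≤ b, k i = l i := by
    intro k l hk hl hkl i hi
    have := hkl i hi
    simp only [Subtype.mk.injEq] at this
    rwa [min_eq_left hi] at this
  have main : (∀ i ≤ b, (⟨f (min i b), mf i⟩ : gBall G (f 0) r) = ⟨g (min i b), mg i⟩) ∨
      (∀ i ≤ b, (⟨f (min i b), mf i⟩ : gBall G (f 0) r) = ⟨h (min i b), mh i⟩) ∨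
      (∀ i ≤ b, (⟨g (min i b), mg i⟩ : gBall G (f 0) r) = ⟨h (min i b), mh i⟩) := by
    rcases hc with ⟨h3, h4⟩ | ⟨s, hs, h3, h4, h5⟩
    · exact three_endpoint hT hxy (lift f hf mf) (lift g hg mg) (lift h hh mh)
        (by simpa using h1) (by simpa using h2) (by simpa using h3) (by simpa using h4)
    · exact three_return hT hxy hs (lift f hf mf) (lift g hg mg) (lift h hh mh)
        (by simpa using h1) (by simpa using h2) (by simpa [hs.le] using h3)
        (by simpa [hs.le] using h4) (by simpa [hs.le] using h5)
  rcases main with m | m | m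
  · exact Or.inl (res f g mf mg m)
  · exact Or.inr (Or.inl (res f h mf mh m))
  · exact Or.inr (Or.inr (res g h mg mh m))

lemma three_walks {V : Type*} [Finite V] (G : SimpleGraph V) {r : ℕ} (hbf : BicycleFree G r)
    {a b : ℕ} (hab : a ≤ b) (hb : b ≤ a + r) {f g h : ℕ → V} (hf : NBW G a b f) (hg : NBW G a b g)
    (hh : NBW G a b h) (h1 : f a = g a) (h2 : f a = h a)
    (hc : (f b = g b ∧ f b = h b) ∨ ∃ s, a ≤ s ∧ s < b ∧ f s = f b ∧ g s = g b ∧ h s = h b) :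
    (∀ i, a ≤ i → i ≤ b → f i = g i) ∨ (∀ i, a ≤ i → i ≤ b → f i = h i) ∨
      (∀ i, a ≤ i → i ≤ b → g i = h i) := by
  obtain ⟨m, rfl⟩ := Nat.exists_eq_add_of_le hab
  have sh : ∀ k : ℕ → V, NBW G a (a + m) k → NBW G 0 m (fun i => k (a + i)) := fun k hk =>
    ⟨fun i _ hi => hk.1 (a + i) (by omega) (by omega),
      fun i _ hi => hk.2 (a + i) (by omega) (by omega)⟩
  have res : ∀ k l : ℕ → V, (∀ i ≤ m, k (a + i) = l (a + i)) →
      ∀ i, a ≤ i → i ≤ a + m → k i = l i := by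
    intro k l hkl i h1 h2
    obtain ⟨j, rfl⟩ := Nat.exists_eq_add_of_le h1
    exact hkl j (by omega)
  have main := three_walks0 G hbf (b := m) (by omega) (sh f hf) (sh g hg) (sh h hh) h1 h2 (by
    rcases hc with h | ⟨s, hs1, hs2, h3⟩
    · exact Or.inl h
    · obtain ⟨j, rfl⟩ := Nat.exists_eq_add_of_le hs1
      exact Or.inr ⟨j, by omega, h3⟩)
  rcases main with m | m | m
  · exact Or.inl (res f g m)
  · exact Or.inr (Or.inl (res f h m))
  · exact Or.inr (Or.inr (res g h m))

def trunc {V : Type*} (t : ℕ) (f : ℕ → V) : ℕ → V := fun i => f (min i t)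

lemma trunc_eq_iff {V : Type*} {t : ℕ} {f g : ℕ → V} :
    trunc t f = trunc t g ↔ ∀ i ≤ t, f i = g i := by
  constructor
  · intro h i hi
    have := congrFun h i
    simpa [trunc, hi] using this
  · intro h
    funext i
    exact h _ (min_le_right _ _)

lemma trunc_trunc {V : Type*} {a b : ℕ} (hab : a ≤ b) (f : ℕ → V) :
    trunc a (trunc b f) = trunc a f := by
  funext i
  simp only [trunc]
  congr 1; omega

/-- Number of length-`t` prefixes. -/
def NN {V : Type*} (S : Finset (ℕ → V)) (t : ℕ) : ℕ := (S.image (trunc t)).card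

lemma NN_step {V : Type*} (S : Finset (ℕ → V)) {a b M : ℕ} (hab : a ≤ b)
    (h : ∀ f0 ∈ S, ((S.filter (fun f => trunc a f = trunc a f0)).image (trunc b)).card ≤ M) :
    NN S b ≤ NN S a * M := by
  have himg : (S.image (trunc b)).image (trunc a) = S.image (trunc a) := by
    rw [Finset.image_image]
    apply Finset.image_congr
    intro f _
    exact trunc_trunc hab f
  have := Finset.card_le_mul_card_image (f := trunc a) (S.image (trunc b)) M (by
    intro p hp
    rw [himg, Finset.mem_image] at hp
    obtain ⟨f0, hf0, rfl⟩ := hp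
    refine le_trans (Finset.card_le_card ?_) (h f0 hf0)
    intro q hq
    rw [Finset.mem_filter, Finset.mem_image] at hq
    obtain ⟨⟨f, hf, rfl⟩, hq⟩ := hq
    rw [trunc_trunc hab] at hq
    exact Finset.mem_image_of_mem _ (Finset.mem_filter.2 ⟨hf, hq⟩))
  rw [himg] at this
  unfold NN
  linarith [mul_comm M (S.image (trunc a)).card]

lemma NN_fresh {V : Type*} [Fintype V] (G : SimpleGraph V) {d : ℕ}
    (hreg : G.IsRegularOfDegree d) (S : Finset (ℕ → V)) {t : ℕ}
    (h1 : ∀ f ∈ S, G.Adj (f t) (f (t + 1)))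
    (h2 : ∀ f ∈ S, t ≠ 0 → G.Adj (f (t - 1)) (f t) ∧ f (t + 1) ≠ f (t - 1)) :
    NN S (t + 1) ≤ NN S t * (if t = 0 then d else d - 1) := by
  apply NN_step S (Nat.le_succ t)
  intro f0 hf0
  have hcard : ∀ A : Finset V, (∀ f ∈ S, f t = f0 t → trunc t f = trunc t f0 → f (t + 1) ∈ A) →
    ((S.filter (fun f => trunc t f = trunc t f0)).image (trunc (t + 1))).card ≤ A.card := by
    intro A hA
    apply Finset.card_le_card_of_injOn (fun p => p (t + 1))
    · intro p hp
      rw [Finset.mem_coe, Finset.mem_image] at hp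
      obtain ⟨f, hf, rfl⟩ := hp
      rw [Finset.mem_filter] at hf
      simpa [trunc] using hA f hf.1 (trunc_eq_iff.1 hf.2 t le_rfl) hf.2
    · intro p hp q hq hpq
      rw [Finset.mem_coe, Finset.mem_image] at hp hq
      obtain ⟨f, hf, rfl⟩ := hp
      obtain ⟨g, hg, rfl⟩ := hq
      rw [Finset.mem_filter] at hf hg
      rw [trunc_eq_iff]
      have h3 := trunc_eq_iff.1 (hf.2.trans hg.2.symm)
      intro i hi
      rcases Nat.lt_or_ge i (t + 1) with h | h
      · exact h3 i (by omega)
      · have : i = t + 1 := by omega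
        subst this
        simpa [trunc] using hpq
  split_ifs with ht
  · refine le_trans (hcard (G.neighborFinset (f0 t)) ?_) ?_
    · intro f hf hft _
      rw [SimpleGraph.mem_neighborFinset, ← hft]
      exact h1 f hf
    · rw [SimpleGraph.card_neighborFinset_eq_degree, hreg]
  · refine le_trans (hcard ((G.neighborFinset (f0 t)).erase (f0 (t - 1))) ?_) ?_
    · intro f hf hft htr
      rw [Finset.mem_erase, SimpleGraph.mem_neighborFinset, ← hft]
      refine ⟨?_, h1 f hf⟩
      rw [← trunc_eq_iff.1 htr (t - 1) (by omega)]
      exact (h2 f hf ht).2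
    · rw [Finset.card_erase_of_mem, SimpleGraph.card_neighborFinset_eq_degree, hreg]
      rw [SimpleGraph.mem_neighborFinset]
      exact (h2 f0 hf0 ht).1.symm

lemma NN_stale {V : Type*} [Fintype V] (G : SimpleGraph V) {r : ℕ} (hr : 1 ≤ r)
    (hbf : BicycleFree G r) (S : Finset (ℕ → V)) {a b : ℕ} (hab : a < b) (hb : b ≤ a + r)
    (R : Finset ℕ) (h1 : ∀ f ∈ S, NBW G a b f) (h2 : ∀ f ∈ S, ∃ i ∈ R, i < b ∧ f i = f b) :
    NN S b ≤ NN S a * (R.card * min 2 r) := by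
  apply NN_step S hab.le
  intro f0 hf0
  let t : ℕ → Finset (ℕ → V) := fun i =>
    (S.filter (fun f => trunc a f = trunc a f0 ∧ i < b ∧ f i = f b)).image (trunc b)
  have hsub : (S.filter (fun f => trunc a f = trunc a f0)).image (trunc b) ⊆ R.biUnion t := by
    intro p hp
    rw [Finset.mem_image] at hp
    obtain ⟨f, hf, rfl⟩ := hp
    rw [Finset.mem_filter] at hf
    obtain ⟨i, hi, hib, hfi⟩ := h2 f hf.1
    rw [Finset.mem_biUnion]
    exact ⟨i, hi, Finset.mem_image_of_mem _ (Finset.mem_filter.2 ⟨hf.1, hf.2, hib, hfi⟩)⟩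
  refine (Finset.card_le_card hsub).trans (Finset.card_biUnion_le_card_mul R t _ ?_)
  intro i _
  have comb : ∀ f g : ℕ → V, trunc a f = trunc a f0 → trunc a g = trunc a f0 →
      (∀ j, a ≤ j → j ≤ b → f j = g j) → trunc b f = trunc b g := by
    intro f g hf hg hfg
    rw [trunc_eq_iff]
    intro j hj
    rcases Nat.lt_or_ge j a with h | h
    · exact trunc_eq_iff.1 (hf.trans hg.symm) j h.le
    · exact hfg j h hj
  have hle2 : (t i).card ≤ 2 := by
    by_contra hcon
    push Not at hcon
    rw [Finset.two_lt_card] at hcon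
    obtain ⟨p, hp, q, hq, s, hs, hpq, hps, hqs⟩ := hcon
    simp only [t, Finset.mem_image, Finset.mem_filter] at hp hq hs
    obtain ⟨f, ⟨hfS, hf, hib, hfi⟩, rfl⟩ := hp
    obtain ⟨g, ⟨hgS, hg, -, hgi⟩, rfl⟩ := hq
    obtain ⟨h, ⟨hhS, hh, -, hhi⟩, rfl⟩ := hs
    have e1 := trunc_eq_iff.1 (hf.trans hg.symm)
    have e2 := trunc_eq_iff.1 (hf.trans hh.symm)
    have := three_walks G hbf hab.le hb (h1 f hfS) (h1 g hgS) (h1 h hhS)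
      (e1 a le_rfl) (e2 a le_rfl) (by
        rcases Nat.lt_or_ge i a with hia | hia
        · left
          rw [← hfi, ← hgi, ← hhi]
          exact ⟨e1 i hia.le, e2 i hia.le⟩
        · right
          exact ⟨i, hia, hib, hfi, hgi, hhi⟩)
    rcases this with m | m | m
    · exact hpq (comb f g hf hg m)
    · exact hps (comb f h hf hh m)
    · exact hqs (comb g h hg hh m)
  refine le_min hle2 ?_
  · rcases Nat.lt_or_ge r 2 with hr2 | hr2
    · have hr1 : r = 1 := by omega
      subst hr1
      rw [Finset.card_le_one]
      intro p hp q hq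
      simp only [t, Finset.mem_image, Finset.mem_filter] at hp hq
      obtain ⟨f, ⟨hfS, hf, hib, hfi⟩, rfl⟩ := hp
      obtain ⟨g, ⟨hgS, hg, -, hgi⟩, rfl⟩ := hq
      have e1 := trunc_eq_iff.1 (hf.trans hg.symm)
      apply comb f g hf hg
      intro j hj hjb
      rcases Nat.lt_or_ge j b with h | h
      · exact e1 j (by omega)
      · have : j = b := by omega
        subst this
        rw [← hfi, ← hgi]
        exact e1 i (by omega)
    · exact le_trans hle2 hr2

/-- Step `t` traverses an edge not traversed before. -/
def Fresh {V : Type*} (f : ℕ → V) (t : ℕ) : Prop :=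
  ∀ s < t, s(f s, f (s + 1)) ≠ s(f t, f (t + 1))

lemma stale_seen {V : Type*} {f : ℕ → V} {t : ℕ} (h : ¬ Fresh f t) :
    ∃ i, i < t + 1 ∧ f i = f (t + 1) ∧ (i = 0 ∨ ∃ j, i = j + 1 ∧ Fresh f j) := by
  have hseen : ∀ t, ¬ Fresh f t → ∃ i, i ≤ t ∧ f i = f (t + 1) := by
    intro t h
    unfold Fresh at h
    push Not at h
    obtain ⟨s, hs, he⟩ := h
    rw [Sym2.eq_iff] at he
    rcases he with ⟨h1, h2⟩ | ⟨h1, h2⟩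
    · exact ⟨s + 1, by omega, h2⟩
    · exact ⟨s, by omega, h1⟩
  have hex : ∃ i, f i = f (t + 1) := ⟨t + 1, rfl⟩
  obtain ⟨i0, hi0, hi0'⟩ := hseen t h
  have hmin : Nat.find hex ≤ i0 := Nat.find_min' hex hi0'
  refine ⟨Nat.find hex, by omega, Nat.find_spec hex, ?_⟩
  rcases hc : Nat.find hex with _ | j
  · exact Or.inl rfl
  · right
    refine ⟨j, rfl, ?_⟩
    by_contra hj
    obtain ⟨i, hi, hi2⟩ := hseen j hj
    have h3 : f (j + 1) = f (t + 1) := by rw [← hc]; exact Nat.find_spec hex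
    have := Nat.find_min' hex (hi2.trans h3)
    omega

/-- Step weight. -/
def wt (d : ℕ) (F : Finset ℕ) (t : ℕ) : ℕ := if t ∈ F then (if t = 0 then d else d - 1) else 1

lemma wt_pos {d : ℕ} (hd : 3 ≤ d) (F : Finset ℕ) (t : ℕ) : 1 ≤ wt d F t := by
  unfold wt; split_ifs <;> omega

lemma NN_window {V : Type*} [Fintype V] (G : SimpleGraph V) {r d K : ℕ} (hd : 3 ≤ d) (hr : 1 ≤ r)
    (hreg : G.IsRegularOfDegree d) (hbf : BicycleFree G r) (S : Finset (ℕ → V)) (F : Finset ℕ)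
    (hFc : F.card ≤ K)
    (hadj : ∀ f ∈ S, ∀ i < 2 * K, G.Adj (f i) (f (i + 1)))
    (hnb : ∀ f ∈ S, ∀ i, i + 2 ≤ 2 * K → i + 1 ≠ K → f (i + 2) ≠ f i)
    (hF : ∀ f ∈ S, ∀ t < 2 * K, (t ∈ F ↔ Fresh f t)) {a : ℕ} (m : ℕ) :
    m ≤ r → a + m ≤ 2 * K → (a + m ≤ K ∨ K ≤ a) →
    NN S (a + m) ≤ NN S a * (((K + 1) * min 2 r) * ∏ t ∈ Finset.Ico a (a + m), wt d F t) := by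
  have hC : 1 ≤ (K + 1) * min 2 r := Nat.mul_pos (by omega) (by omega)
  induction m with
  | zero =>
    intro _ _ _
    simp only [add_zero, Finset.Ico_self, Finset.prod_empty, mul_one]
    exact Nat.le_mul_of_pos_right _ hC
  | succ m ih =>
    intro hm hK hside
    have hih := ih (by omega) (by omega) (by omega)
    rw [← add_assoc, Finset.prod_Ico_succ_top (by omega)]
    by_cases hmem : a + m ∈ F
    · have h1 : NN S (a + m + 1) ≤ NN S (a + m) * wt d F (a + m) := by
        have : wt d F (a + m) = if a + m = 0 then d else d - 1 := by simp only [wt, if_pos hmem]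
        rw [this]
        apply NN_fresh G hreg S
        · intro f hf; exact hadj f hf _ (by omega)
        · intro f hf h0
          obtain ⟨t, ht⟩ := Nat.exists_eq_succ_of_ne_zero h0
          have hfr := (hF f hf (a + m) (by omega)).1 hmem
          rw [ht] at hfr ⊢
          simp only [Nat.succ_eq_add_one, Nat.add_sub_cancel] at hfr ⊢
          refine ⟨hadj f hf t (by omega), fun h => ?_⟩
          apply hfr t (by omega)
          rw [h, Sym2.eq_swap]
      calc NN S (a + m + 1) ≤ NN S (a + m) * wt d F (a + m) := h1
        _ ≤ _ := Nat.mul_le_mul_right _ hih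
        _ = _ := by ring
    · have h1 := NN_stale G hr hbf S (a := a) (b := a + m + 1) (by omega) (by omega)
        (insert 0 (F.image Nat.succ))
        (fun f hf => ⟨fun i _ hi => hadj f hf i (by omega),
          fun i hi hi2 => hnb f hf i (by omega) (by omega)⟩)
        (by
          intro f hf
          obtain ⟨i, hi, hi2, hi3⟩ := stale_seen (fun h => hmem ((hF f hf (a + m) (by omega)).2 h))
          refine ⟨i, ?_, hi, hi2⟩
          rcases hi3 with rfl | ⟨j, rfl, hj⟩
          · simp
          · exact Finset.mem_insert_of_mem
              (Finset.mem_image_of_mem _ ((hF f hf j (by omega)).2 hj)))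
      have h2 : (insert 0 (F.image Nat.succ)).card ≤ K + 1 :=
        (Finset.card_insert_le _ _).trans (by have := Finset.card_image_le (s := F) (f := Nat.succ); omega)
      have h3 : 1 ≤ (∏ t ∈ Finset.Ico a (a + m), wt d F t) * wt d F (a + m) :=
        Nat.mul_pos (Finset.prod_pos fun t _ => wt_pos hd F t) (wt_pos hd F _)
      calc NN S (a + m + 1) ≤ _ := h1
        _ ≤ NN S a * ((K + 1) * min 2 r) := by gcongr
        _ ≤ _ := by
          apply Nat.mul_le_mul_left
          exact Nat.le_mul_of_pos_right _ h3

lemma NN_stage {V : Type*} [Fintype V] (G : SimpleGraph V) {r d K : ℕ} (hd : 3 ≤ d) (hr : 1 ≤ r)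
    (hreg : G.IsRegularOfDegree d) (hbf : BicycleFree G r) (S : Finset (ℕ → V)) (F : Finset ℕ)
    (hFc : F.card ≤ K)
    (hadj : ∀ f ∈ S, ∀ i < 2 * K, G.Adj (f i) (f (i + 1)))
    (hnb : ∀ f ∈ S, ∀ i, i + 2 ≤ 2 * K → i + 1 ≠ K → f (i + 2) ≠ f i)
    (hF : ∀ f ∈ S, ∀ t < 2 * K, (t ∈ F ↔ Fresh f t)) {a : ℕ} (ha : a + K ≤ 2 * K)
    (hside : a + K ≤ K ∨ K ≤ a) (j : ℕ) :
    NN S (a + min (j * r) K) ≤ NN S a *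
      (((K + 1) * min 2 r) ^ j * ∏ t ∈ Finset.Ico a (a + min (j * r) K), wt d F t) := by
  induction j with
  | zero => simp
  | succ j ih =>
    obtain ⟨m, hm⟩ : ∃ m, min ((j + 1) * r) K = min (j * r) K + m :=
      Nat.exists_eq_add_of_le (by apply min_le_min_right; gcongr; omega)
    have hmr : m ≤ r := by
      have : (j + 1) * r = j * r + r := by ring
      omega
    have hle : min ((j + 1) * r) K ≤ K := min_le_right _ _
    have h1 := NN_window G hd hr hreg hbf S F hFc hadj hnb hF (a := a + min (j * r) K) m hmr
      (by omega) (by omega)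
    rw [hm, ← add_assoc]
    rw [← Finset.prod_Ico_consecutive _ (Nat.le_add_right a (min (j * r) K))
      (Nat.le_add_right (a + min (j * r) K) m)]
    calc _ ≤ _ := h1
      _ ≤ _ := Nat.mul_le_mul_right _ ih
      _ = _ := by ring

lemma prod_wt {d K : ℕ} (hd : 3 ≤ d) (hK : 1 ≤ K) (F : Finset ℕ) (hFc : F.card ≤ K)
    (s : Finset ℕ) : ∏ t ∈ s, wt d F t ≤ d * (d - 1) ^ (K - 1) := by
  have h1 : ∏ t ∈ s, wt d F t ≤ ∏ t ∈ F, (if t = 0 then d else d - 1) := by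
    unfold wt
    rw [← Finset.prod_filter]
    apply Finset.prod_le_prod_of_subset_of_one_le'
    · intro t ht; exact (Finset.mem_filter.1 ht).2
    · intro t _ _; split_ifs <;> omega
  refine h1.trans ?_
  have h2 : ∀ E : Finset ℕ, 0 ∉ E → ∏ t ∈ E, (if t = 0 then d else d - 1) = (d - 1) ^ E.card := by
    intro E hE
    apply Finset.prod_eq_pow_card
    intro t ht
    rw [if_neg]
    rintro rfl; exact hE ht
  by_cases h0 : 0 ∈ F
  · rw [← Finset.mul_prod_erase F _ h0, h2 _ (by simp), Finset.card_erase_of_mem h0]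
    simp only [if_true]
    gcongr <;> omega
  · rw [h2 F h0]
    calc (d - 1) ^ F.card ≤ (d - 1) ^ K := by gcongr; omega
      _ = (d - 1) * (d - 1) ^ (K - 1) := by rw [← pow_succ']; congr 1; omega
      _ ≤ _ := by gcongr; omega

lemma NN_total {V : Type*} [Fintype V] (G : SimpleGraph V) {r d K q : ℕ} (hd : 3 ≤ d) (hr : 1 ≤ r)
    (hK : 1 ≤ K) (hq : K ≤ q * r)
    (hreg : G.IsRegularOfDegree d) (hbf : BicycleFree G r) (S : Finset (ℕ → V)) (F : Finset ℕ)
    (hFc : F.card ≤ K)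
    (hadj : ∀ f ∈ S, ∀ i < 2 * K, G.Adj (f i) (f (i + 1)))
    (hnb : ∀ f ∈ S, ∀ i, i + 2 ≤ 2 * K → i + 1 ≠ K → f (i + 2) ≠ f i)
    (hF : ∀ f ∈ S, ∀ t < 2 * K, (t ∈ F ↔ Fresh f t)) :
    NN S (2 * K) ≤ Fintype.card V * (((K + 1) * min 2 r) ^ (2 * q) * (d * (d - 1) ^ (K - 1))) := by
  have h0 : NN S 0 ≤ Fintype.card V := by
    unfold NN
    rw [← Finset.card_univ]
    apply Finset.card_le_card_of_injOn (fun p => p 0)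
    · intro p _; simp
    · intro p hp q hq hpq
      rw [Finset.mem_coe, Finset.mem_image] at hp hq
      obtain ⟨f, hf, rfl⟩ := hp
      obtain ⟨g, hg, rfl⟩ := hq
      rw [trunc_eq_iff]
      intro i hi
      obtain rfl : i = 0 := by omega
      simpa [trunc] using hpq
  have h1 := NN_stage G hd hr hreg hbf S F hFc hadj hnb hF (a := 0) (by omega) (by omega) q
  have h2 := NN_stage G hd hr hreg hbf S F hFc hadj hnb hF (a := K) (by omega) (by omega) q
  rw [min_eq_right hq] at h1 h2
  rw [zero_add] at h1
  have hp := prod_wt hd hK F hFc (Finset.Ico 0 (K + K))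
  rw [← Finset.prod_Ico_consecutive _ (Nat.zero_le K) (Nat.le_add_right K K)] at hp
  rw [two_mul K]
  calc _ ≤ _ := h2
    _ ≤ _ := Nat.mul_le_mul_right _ h1
    _ = NN S 0 * (((K + 1) * min 2 r) ^ (2 * q) * ((∏ t ∈ Finset.Ico 0 K, wt d F t) *
        ∏ t ∈ Finset.Ico K (K + K), wt d F t)) := by ring
    _ ≤ _ := by gcongr

def extF {n : ℕ} (K : ℕ) (f : Fin (2 * K + 1) → Fin n) : ℕ → Fin n :=
  fun i => f ⟨min i (2 * K), by omega⟩

lemma extF_apply {n : ℕ} {K : ℕ} (f : Fin (2 * K + 1) → Fin n) {i : ℕ} (hi : i ≤ 2 * K) :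
    extF K f i = f ⟨i, by omega⟩ := by
  unfold extF
  congr 1
  exact Fin.ext (min_eq_left hi)

lemma extF_inj {n : ℕ} (K : ℕ) : Function.Injective (extF (n := n) K) := by
  intro f g h
  funext i
  have := congrFun h i.1
  rwa [extF_apply f (by omega), extF_apply g (by omega)] at this

/-- Set of fresh steps. -/
def freshSet {V : Type*} (K : ℕ) (f : ℕ → V) : Finset ℕ :=
  (Finset.range (2 * K)).filter (fun t => Fresh f t)

lemma fresh_card {n : ℕ} {K : ℕ} (f : Fin (2 * K + 1) → Fin n) (hf : IsSingletonFree K f) :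
    (freshSet K (extF K f)).card ≤ K := by
  let e : Fin (2 * K) → Sym2 (Fin n) := fun i =>
    s(f ⟨i.1, Nat.lt_succ_of_lt i.2⟩, f ⟨i.1 + 1, Nat.succ_lt_succ i.2⟩)
  have h1 := Finset.mul_card_image_le_card (f := e) (Finset.univ : Finset (Fin (2 * K))) 2 (by
    intro x hx
    rw [Finset.mem_image] at hx
    obtain ⟨i, -, rfl⟩ := hx
    have h2 := hf (e i)
    have h3 : 0 < edgeCount K f (e i) := by
      unfold edgeCount
      exact Finset.card_pos.2 ⟨i, by simp [e]⟩
    have h4 : 2 ≤ edgeCount K f (e i) := by omega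
    exact h4)
  rw [Finset.card_univ, Fintype.card_fin] at h1
  have h2 : (freshSet K (extF K f)).card ≤ (Finset.univ.image e).card := by
    apply Finset.card_le_card_of_injOn (fun t => s(extF K f t, extF K f (t + 1)))
    · intro t ht
      have ht' : t < 2 * K := by
        have := (Finset.mem_filter.1 ht).1
        simpa using this
      rw [Finset.mem_coe, Finset.mem_image]
      refine ⟨⟨t, ht'⟩, Finset.mem_univ _, ?_⟩
      simp only [e]
      rw [extF_apply f (by omega), extF_apply f (by omega)]
    · intro t ht t' ht' htt
      have a1 := (Finset.mem_filter.1 ht).2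
      have a2 := (Finset.mem_filter.1 ht').2
      rcases Nat.lt_trichotomy t t' with h | h | h
      · exact absurd htt (a2 t h)
      · exact h
      · exact absurd htt.symm (a1 t' h)
  omega

lemma count_hikes {n d r K q : ℕ} (hd : 3 ≤ d) (hr : 1 ≤ r) (hK : 1 ≤ K) (hq : K ≤ q * r)
    (G : SimpleGraph (Fin n)) (hreg : G.IsRegularOfDegree d) (hbf : BicycleFree G r) :
    {f : Fin (2 * K + 1) → Fin n | IsHike G K f ∧ IsSingletonFree K f}.ncard ≤
      2 ^ (2 * K) * (n * (((K + 1) * min 2 r) ^ (2 * q) * (d * (d - 1) ^ (K - 1)))) := by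
  set A : Finset (Fin (2 * K + 1) → Fin n) :=
    Finset.univ.filter (fun f => IsHike G K f ∧ IsSingletonFree K f) with hA
  have hset : {f : Fin (2 * K + 1) → Fin n | IsHike G K f ∧ IsSingletonFree K f} = ↑A := by
    ext f; simp [hA]
  rw [hset, Set.ncard_coe_finset]
  set S := A.image (extF K) with hS
  have hcard : A.card = S.card := (Finset.card_image_of_injective _ (extF_inj K)).symm
  have hSmem : ∀ g ∈ S, ∃ f, IsHike G K f ∧ IsSingletonFree K f ∧ g = extF K f := by
    intro g hg
    rw [hS, Finset.mem_image] at hg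
    obtain ⟨f, hf, rfl⟩ := hg
    rw [hA, Finset.mem_filter] at hf
    exact ⟨f, hf.2.1, hf.2.2, rfl⟩
  have hmaps : ∀ g ∈ S, freshSet K g ∈ (Finset.range (2 * K)).powerset := by
    intro g _
    rw [Finset.mem_powerset]
    exact Finset.filter_subset _ _
  rw [hcard, Finset.card_eq_sum_card_fiberwise (f := freshSet K)
    (t := (Finset.range (2 * K)).powerset) hmaps]
  have hbound : ∀ F ∈ (Finset.range (2 * K)).powerset,
      (S.filter (fun g => freshSet K g = F)).card ≤
      n * (((K + 1) * min 2 r) ^ (2 * q) * (d * (d - 1) ^ (K - 1))) := by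
    intro F _
    set SF := S.filter (fun g => freshSet K g = F) with hSF
    rcases SF.eq_empty_or_nonempty with he | ⟨g0, hg0⟩
    · rw [he]; simp
    have hmem : ∀ g ∈ SF, freshSet K g = F ∧
        ∃ f, IsHike G K f ∧ IsSingletonFree K f ∧ g = extF K f := by
      intro g hg
      rw [hSF, Finset.mem_filter] at hg
      exact ⟨hg.2, hSmem g hg.1⟩
    have hFc : F.card ≤ K := by
      obtain ⟨h1, f, hf, hf2, rfl⟩ := hmem g0 hg0
      rw [← h1]
      exact fresh_card f hf2
    have hN : SF.card = NN SF (2 * K) := by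
      unfold NN
      symm
      apply Finset.card_image_of_injOn
      intro g hg g' hg' h
      obtain ⟨-, f, -, -, rfl⟩ := hmem g hg
      obtain ⟨-, f', -, -, rfl⟩ := hmem g' hg'
      congr 1
      funext i
      have := trunc_eq_iff.1 h i.1 (by omega)
      rwa [extF_apply f (by omega), extF_apply f' (by omega)] at this
    rw [hN]
    have := NN_total G hd hr hK hq hreg hbf SF F hFc
      (by
        intro g hg i hi
        obtain ⟨-, f, hf, -, rfl⟩ := hmem g hg
        rw [extF_apply f (by omega), extF_apply f (by omega)]
        exact hf.1 i hi)
      (by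
        intro g hg i hi hiK
        obtain ⟨-, f, hf, -, rfl⟩ := hmem g hg
        rw [extF_apply f (by omega), extF_apply f (by omega)]
        exact hf.2.2 (i + 1) (by omega) (by omega) hiK)
      (by
        intro g hg t ht
        rw [← (hmem g hg).1]
        simp [freshSet, ht])
    rwa [Fintype.card_fin] at this
  refine (Finset.sum_le_card_nsmul _ _ _ hbound).trans ?_
  rw [Finset.card_powerset, Finset.card_range, smul_eq_mul]

lemma num_aux {r : ℕ} (hr : 5 ≤ r) (p : ℕ) :
    3 * 4 ^ (p + 1) * ((p + 1) * r + 1) ≤ 16 * r ^ (2 * p + 1) := by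
  induction p with
  | zero => simp; omega
  | succ p ih =>
    have h1 : 3 * 4 ^ (p + 1 + 1) * ((p + 1 + 1) * r + 1) ≤
        25 * (3 * 4 ^ (p + 1) * ((p + 1) * r + 1)) := by
      have : 4 * ((p + 1 + 1) * r + 1) ≤ 25 * ((p + 1) * r + 1) := by nlinarith
      calc 3 * 4 ^ (p + 1 + 1) * ((p + 1 + 1) * r + 1)
          = 3 * 4 ^ (p + 1) * (4 * ((p + 1 + 1) * r + 1)) := by ring
        _ ≤ 3 * 4 ^ (p + 1) * (25 * ((p + 1) * r + 1)) := by gcongr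
        _ = _ := by ring
    have h2 : 25 ≤ r ^ 2 := by nlinarith
    calc _ ≤ _ := h1
      _ ≤ r ^ 2 * (16 * r ^ (2 * p + 1)) := Nat.mul_le_mul h2 ih
      _ = _ := by ring

/-- The main numeric comparison. `q = p + 1` is the number of windows per half. -/
lemma num_main {r K p : ℕ} (hr : 1 ≤ r) (h1 : p * r + 1 ≤ K) (h2 : K ≤ (p + 1) * r) :
    (3 : ℝ) * ((K + 1 : ℝ) * (min 2 r : ℕ)) ^ (2 * (p + 1)) ≤
      16 * ((r : ℝ) * (K + 1)) ^ (1 + 2 * ((K : ℝ) + 1) / r) := by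
  have hr0 : (1 : ℝ) ≤ r := by exact_mod_cast hr
  have hK0 : (0 : ℝ) ≤ K := Nat.cast_nonneg K
  have hb : (1 : ℝ) ≤ (r : ℝ) * (K + 1) := by nlinarith
  have hexp : (2 * p + 1 : ℝ) + 4 / r ≤ 1 + 2 * ((K : ℝ) + 1) / r := by
    have h3 : (p : ℝ) * r + 1 ≤ K := by exact_mod_cast h1
    have : 1 + 2 * ((K : ℝ) + 1) / r - ((2 * p + 1 : ℝ) + 4 / r) = 2 * (K - 1 - p * r) / r := by
      field_simp; ring
    have h4 : 0 ≤ 2 * ((K : ℝ) - 1 - p * r) / r := by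
      apply div_nonneg <;> linarith
    linarith
  rcases Nat.lt_or_ge r 5 with hr5 | hr5
  · have h5 : ((K + 1 : ℝ) * (min 2 r : ℕ)) ^ (2 * (p + 1)) ≤
        ((r : ℝ) * (K + 1)) ^ (2 * (p + 1)) := by
      apply pow_le_pow_left₀ (by positivity)
      rw [mul_comm]
      gcongr
      exact min_le_right _ _
    have h6 : ((r : ℝ) * (K + 1)) ^ (2 * (p + 1)) ≤
        ((r : ℝ) * (K + 1)) ^ (1 + 2 * ((K : ℝ) + 1) / r) := by
      rw [← Real.rpow_natCast]
      apply Real.rpow_le_rpow_of_exponent_le hb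
      refine le_trans ?_ hexp
      have : (1 : ℝ) ≤ 4 / r := by
        rw [le_div_iff₀ (by linarith)]
        have : (r : ℝ) ≤ 4 := by exact_mod_cast (by omega : r ≤ 4)
        linarith
      push_cast
      linarith
    have h7 : (0 : ℝ) ≤ ((r : ℝ) * (K + 1)) ^ (1 + 2 * ((K : ℝ) + 1) / r) := by positivity
    linarith
  · have h6 : ((r : ℝ) * (K + 1)) ^ (2 * p + 1) ≤
        ((r : ℝ) * (K + 1)) ^ (1 + 2 * ((K : ℝ) + 1) / r) := by
      rw [← Real.rpow_natCast]
      apply Real.rpow_le_rpow_of_exponent_le hb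
      refine le_trans ?_ hexp
      have : (0 : ℝ) ≤ 4 / r := by positivity
      push_cast
      linarith
    rw [min_eq_left (by omega : 2 ≤ r)]
    have h7 : 3 * 4 ^ (p + 1) * (K + 1) ≤ 16 * r ^ (2 * p + 1) :=
      le_trans (by gcongr) (num_aux hr5 p)
    have h8 : (3 : ℝ) * 4 ^ (p + 1) * (K + 1) ≤ 16 * r ^ (2 * p + 1) := by exact_mod_cast h7
    calc (3 : ℝ) * ((K + 1 : ℝ) * (2 : ℕ)) ^ (2 * (p + 1))
        = (3 * 4 ^ (p + 1) * (K + 1)) * (K + 1 : ℝ) ^ (2 * p + 1) := by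
          have : (4 : ℝ) ^ (p + 1) = 2 ^ (2 * (p + 1)) := by rw [pow_mul]; norm_num
          rw [this, mul_pow]; push_cast; ring
      _ ≤ (16 * r ^ (2 * p + 1)) * (K + 1 : ℝ) ^ (2 * p + 1) := by gcongr
      _ = 16 * ((r : ℝ) * (K + 1)) ^ (2 * p + 1) := by rw [mul_pow]; ring
      _ ≤ _ := by gcongr

lemma rhs_eq {n d r k : ℕ} (hd : 3 ≤ d) (hr : 1 ≤ r) (hk : 1 ≤ k) (hn : 1 ≤ n) :
    ((2 : ℝ) ^ (1 + Real.logb 2 ((n : ℝ) * r * k) / (2 * k) + Real.logb 2 ((r : ℝ) * k) / r)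
          * Real.sqrt ((d : ℝ) - 1)) ^ (2 * k) =
      4 ^ k * n * ((r : ℝ) * k) ^ (1 + 2 * (k : ℝ) / r) * ((d : ℝ) - 1) ^ k := by
  have hr0 : (0 : ℝ) < r := by exact_mod_cast hr
  have hk0 : (0 : ℝ) < k := by exact_mod_cast hk
  have hn0 : (0 : ℝ) < n := by exact_mod_cast hn
  have hd0 : (0 : ℝ) ≤ (d : ℝ) - 1 := by
    have : (3 : ℝ) ≤ d := by exact_mod_cast hd
    linarith
  rw [mul_pow, pow_mul (Real.sqrt _), Real.sq_sqrt hd0]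
  congr 1
  rw [← Real.rpow_natCast, ← Real.rpow_mul (by norm_num)]
  have e : (1 + Real.logb 2 ((n : ℝ) * r * k) / (2 * k) + Real.logb 2 ((r : ℝ) * k) / r) *
      ((2 * k : ℕ) : ℝ) = ((2 * k : ℕ) : ℝ) + Real.logb 2 ((n : ℝ) * r * k) +
        Real.logb 2 ((r : ℝ) * k) * (2 * k / r) := by
    push_cast; field_simp
  rw [e, Real.rpow_add (by norm_num), Real.rpow_add (by norm_num), Real.rpow_mul (by norm_num),
    Real.rpow_natCast, Real.rpow_logb (by norm_num) (by norm_num) (by positivity),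
    Real.rpow_logb (by norm_num) (by norm_num) (by positivity),
    Real.rpow_add (by positivity), Real.rpow_one, pow_mul]
  norm_num
  ring

/-- First counting bound for singleton-free `(k-1)`-hikes in a `d`-regular graph that is
bicycle-free at radius `r`. -/
theorem stmt9 {n d r k : ℕ} (hd : 3 ≤ d) (hr : 1 ≤ r) (hk : 1 ≤ k)
    (G : SimpleGraph (Fin n)) (hreg : G.IsRegularOfDegree d) (hbf : BicycleFree G r) :
    ({f : Fin (2 * (k - 1) + 1) → Fin n |
        IsHike G (k - 1) f ∧ IsSingletonFree (k - 1) f}.ncard : ℝ)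
      ≤ ((2 : ℝ) ^ (1 + Real.logb 2 ((n : ℝ) * r * k) / (2 * k) + Real.logb 2 ((r : ℝ) * k) / r)
          * Real.sqrt ((d : ℝ) - 1)) ^ (2 * k) := by
  rcases Nat.eq_zero_or_pos n with rfl | hn
  · have : {f : Fin (2 * (k - 1) + 1) → Fin 0 |
        IsHike G (k - 1) f ∧ IsSingletonFree (k - 1) f} = ∅ := by
      ext f
      exact (f 0).elim0
    rw [this, Set.ncard_empty, Nat.cast_zero]
    positivity
  rw [rhs_eq hd hr hk hn]
  obtain ⟨K, rfl⟩ : ∃ K, k = K + 1 := ⟨k - 1, by omega⟩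
  rw [Nat.add_sub_cancel]
  have hr0 : (1 : ℝ) ≤ r := by exact_mod_cast hr
  have hd0 : (3 : ℝ) ≤ d := by exact_mod_cast hd
  have hK0 : (0 : ℝ) ≤ K := Nat.cast_nonneg K
  rcases Nat.eq_zero_or_pos K with rfl | hK
  · have h1 : {f : Fin (2 * 0 + 1) → Fin n |
        IsHike G 0 f ∧ IsSingletonFree 0 f}.ncard ≤ n := by
      refine (Set.ncard_le_ncard (Set.subset_univ _) (Set.toFinite _)).trans ?_
      rw [Set.ncard_univ, Nat.card_eq_fintype_card]
      simp
    refine le_trans (Nat.cast_le.2 h1) ?_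
    have h2 : (1 : ℝ) ≤ ((r : ℝ) * ((0 + 1 : ℕ) : ℝ)) ^ (1 + 2 * ((0 + 1 : ℕ) : ℝ) / r) := by
      apply Real.one_le_rpow
      · simpa using hr0
      · positivity
    have h3 : (1 : ℝ) ≤ 4 ^ (0 + 1) := by norm_num
    have h4 : (1 : ℝ) ≤ ((d : ℝ) - 1) ^ (0 + 1) := by simp; linarith
    have hn0 : (0 : ℝ) ≤ n := Nat.cast_nonneg n
    calc (n : ℝ) = 1 * n * 1 * 1 := by ring
      _ ≤ _ := by gcongr
  obtain ⟨p, hp1, hp2⟩ : ∃ p, p * r + 1 ≤ K ∧ K ≤ (p + 1) * r := by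
    refine ⟨(K - 1) / r, ?_, ?_⟩
    · have := Nat.div_mul_le_self (K - 1) r
      omega
    · have := Nat.lt_div_mul_add (a := K - 1) (b := r) (by omega)
      have e : ((K - 1) / r + 1) * r = (K - 1) / r * r + r := by ring
      omega
  have hcount := count_hikes hd hr hK hp2 G hreg hbf
  have hnum := num_main hr hp1 hp2
  refine le_trans (Nat.cast_le.2 hcount) ?_
  have hK1 : ((K + 1 : ℕ) : ℝ) = (K : ℝ) + 1 := by push_cast; ring
  rw [hK1]
  set X := ((r : ℝ) * (K + 1)) ^ (1 + 2 * ((K : ℝ) + 1) / r) with hX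
  set Y := ((K + 1 : ℝ) * (min 2 r : ℕ)) ^ (2 * (p + 1)) with hY
  have hX0 : 0 ≤ X := by positivity
  have hY0 : 0 ≤ Y := by positivity
  have hcast : ((2 ^ (2 * K) * (n * (((K + 1) * min 2 r) ^ (2 * (p + 1)) *
      (d * (d - 1) ^ (K - 1)))) : ℕ) : ℝ) =
      4 ^ K * (n * (Y * (d * ((d : ℝ) - 1) ^ (K - 1)))) := by
    rw [hY]
    have e1 : ((d - 1 : ℕ) : ℝ) = (d : ℝ) - 1 := by
      rw [Nat.cast_sub (by omega)]; simp
    have e2 : (4 : ℝ) ^ K = 2 ^ (2 * K) := by rw [pow_mul]; norm_num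
    rw [e2, ← e1]
    simp only [Nat.cast_mul, Nat.cast_pow, Nat.cast_add, Nat.cast_one, Nat.cast_ofNat]
  rw [hcast]
  have e3 : ((d : ℝ) - 1) ^ (K + 1) = ((d : ℝ) - 1) ^ (K - 1) * ((d : ℝ) - 1) ^ 2 := by
    rw [← pow_add]; congr 1; omega
  rw [e3]
  have hD0 : (0 : ℝ) ≤ ((d : ℝ) - 1) ^ (K - 1) := pow_nonneg (by linarith) _
  have hkey : Y * d ≤ 4 * X * ((d : ℝ) - 1) ^ 2 := by
    have h3 : 4 * (d : ℝ) ≤ 3 * ((d : ℝ) - 1) ^ 2 := by nlinarith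
    nlinarith [mul_le_mul_of_nonneg_right hnum (by linarith : (0 : ℝ) ≤ d),
      mul_le_mul_of_nonneg_left h3 hX0]
  calc (4 : ℝ) ^ K * (n * (Y * (d * ((d : ℝ) - 1) ^ (K - 1))))
      = 4 ^ K * n * ((d : ℝ) - 1) ^ (K - 1) * (Y * d) := by ring
    _ ≤ 4 ^ K * n * ((d : ℝ) - 1) ^ (K - 1) * (4 * X * ((d : ℝ) - 1) ^ 2) := by gcongr
    _ = _ := by ring
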